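/- Let A(t) = ∑_{n≥0} A_n tⁿ be a formal power series with complex coefficients. There exists a formal power series u ∈ ℂ[[t]] with constant term u(0) = 1 satisfying the formal differential equation t·u″(t) − 2·u′(t) + A(t)·u(t) = 0 if and only if A₀³ + 4·A₀·A₁ + 4·A₂ = 0. -/

import Mathlib

open PowerSeries

/-! Comparing coefficients of `tⁿ` in `t·u″ − m·u′ + A·u = 0` gives the recurrence
`(n + 1)(n − m) uₙ₊₁ + [tⁿ](A·u) = 0`. It determines `uₙ₊₁` from its predecessors except at the
resonance `n = m`, where `uₘ₊₁` drops out and what remains is the single condition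
`[tᵐ](A·u) = 0` on the coefficients `u₀, …, uₘ`, which are already polynomials in `A₀, …, Aₘ₋₁`.
For `m = 2` it reads `A₂ + A₁(A₀/2) + A₀(A₁/2 + A₀²/4) = 0`. -/

theorem coeff_mul_congr_right {R : Type*} [Semiring R] {n : ℕ} (A : R⟦X⟧) {u v : R⟦X⟧}
    (h : ∀ i ≤ n, coeff i u = coeff i v) : coeff n (A * u) = coeff n (A * v) := by
  rw [coeff_mul, coeff_mul]
  exact Finset.sum_congr rfl fun p hp ↦ by
    rw [h p.2 (Finset.HasAntidiagonal.antidiagonal.snd_le hp)]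

section Operator

variable {R : Type*} [CommRing R]

/-- The operator `u ↦ t·u″ − m·u′ + A·u` on formal power series. For `ψ = t⁻ᵏu`, the
Schrödinger equation `ψ″ − k(k+1)/t²·ψ + (A/t)·ψ = 0` says that this vanishes with `m = 2k`. -/
noncomputable def fuchsianOp (m : ℕ) (A u : R⟦X⟧) : R⟦X⟧ :=
  X * d⁄dX R (d⁄dX R u) - (m : R⟦X⟧) * d⁄dX R u + A * u

theorem coeff_fuchsianOp (m : ℕ) (A u : R⟦X⟧) (n : ℕ) :
    coeff n (fuchsianOp m A u) =
      ((n : R) + 1) * ((n : R) - m) * coeff (n + 1) u + coeff n (A * u) := by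
  rw [fuchsianOp, ← nsmul_eq_mul, map_add, map_sub, map_nsmul, coeff_derivative, nsmul_eq_mul]
  congr 1
  cases n with
  | zero => simp
  | succ n =>
    simp only [coeff_succ_X_mul, coeff_derivative]
    push_cast
    ring

theorem coeff_fuchsianOp_self (m : ℕ) (A u : R⟦X⟧) :
    coeff m (fuchsianOp m A u) = coeff m (A * u) := by
  rw [coeff_fuchsianOp, sub_self, mul_zero, zero_mul, zero_add]

theorem coeff_eq_of_coeff_fuchsianOp_eq [NoZeroDivisors R] [CharZero R] {m : ℕ} {A u v : R⟦X⟧}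
    (h_zero : coeff 0 u = coeff 0 v)
    (h_op : ∀ n < m, coeff n (fuchsianOp m A u) = coeff n (fuchsianOp m A v)) :
    ∀ n ≤ m, coeff n u = coeff n v := by
  intro n
  induction n using Nat.strong_induction_on with
  | _ n ih =>
    cases n with
    | zero => exact fun _ ↦ h_zero
    | succ n =>
      intro hn
      have h_lower : coeff n (A * u) = coeff n (A * v) :=
        coeff_mul_congr_right A fun i hi ↦ ih i (by lia) (by lia)
      have h_factor : ((n : R) + 1) * ((n : R) - m) ≠ 0 :=
        mul_ne_zero n.cast_add_one_ne_zero (sub_ne_zero.mpr (Nat.cast_injective.ne (by lia)))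
      have h_step := h_op n hn
      rw [coeff_fuchsianOp, coeff_fuchsianOp, h_lower] at h_step
      exact mul_left_cancel₀ h_factor (add_right_cancel h_step)

end Operator

section FrobeniusSeries

variable {K : Type*} [Field K]

/-- The coefficients of the Frobenius solution with `u₀ = 1`. At the resonance `n = m` the
denominator vanishes, so that Lean's division sets the free coefficient `uₘ₊₁` to `0`. -/
noncomputable def frobeniusCoeff (m : ℕ) (A : K⟦X⟧) : ℕ → K
  | 0 => 1
  | n + 1 => -(∑ i : Fin (n + 1), frobeniusCoeff m A i * coeff (n - i) A) /
      (((n : K) + 1) * ((n : K) - m))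

/-- The Frobenius series: the candidate solution of `fuchsianOp m A u = 0` with `u(0) = 1`. -/
noncomputable def frobeniusSeries (m : ℕ) (A : K⟦X⟧) : K⟦X⟧ :=
  mk (frobeniusCoeff m A)

theorem coeff_zero_frobeniusSeries (m : ℕ) (A : K⟦X⟧) : coeff 0 (frobeniusSeries m A) = 1 := by
  rw [frobeniusSeries, coeff_mk, frobeniusCoeff]

theorem coeff_succ_frobeniusSeries (m : ℕ) (A : K⟦X⟧) (n : ℕ) :
    coeff (n + 1) (frobeniusSeries m A) =
      -coeff n (A * frobeniusSeries m A) / (((n : K) + 1) * ((n : K) - m)) := by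
  rw [mul_comm A, coeff_mul,
    Finset.Nat.sum_antidiagonal_eq_sum_range_succ
      (fun i j ↦ coeff i (frobeniusSeries m A) * coeff j A), Finset.sum_range]
  simp only [frobeniusSeries, coeff_mk]
  rw [frobeniusCoeff]

variable [CharZero K]

theorem coeff_fuchsianOp_frobeniusSeries {m n : ℕ} (A : K⟦X⟧) (hn : n ≠ m) :
    coeff n (fuchsianOp m A (frobeniusSeries m A)) = 0 := by
  have h_factor : ((n : K) + 1) * ((n : K) - m) ≠ 0 :=
    mul_ne_zero n.cast_add_one_ne_zero (sub_ne_zero.mpr (Nat.cast_injective.ne hn))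
  rw [coeff_fuchsianOp, coeff_succ_frobeniusSeries, mul_div_cancel₀ _ h_factor, neg_add_cancel]

theorem exists_fuchsianOp_eq_zero_iff (m : ℕ) (A : K⟦X⟧) :
    (∃ u : K⟦X⟧, constantCoeff u = 1 ∧ fuchsianOp m A u = 0) ↔
      coeff m (A * frobeniusSeries m A) = 0 := by
  simp only [← coeff_zero_eq_constantCoeff_apply]
  constructor
  · rintro ⟨u, hu_zero, hu⟩
    have h_agree : ∀ n ≤ m, coeff n (frobeniusSeries m A) = coeff n u :=
      coeff_eq_of_coeff_fuchsianOp_eq ((coeff_zero_frobeniusSeries m A).trans hu_zero.symm)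
        fun n hn ↦ by rw [coeff_fuchsianOp_frobeniusSeries A hn.ne, hu, map_zero]
    rw [coeff_mul_congr_right A h_agree, ← coeff_fuchsianOp_self, hu, map_zero]
  · intro h_resonance
    refine ⟨frobeniusSeries m A, coeff_zero_frobeniusSeries m A, ?_⟩
    ext n
    rw [map_zero]
    obtain rfl | hn := eq_or_ne n m
    · rw [coeff_fuchsianOp_self, h_resonance]
    · exact coeff_fuchsianOp_frobeniusSeries A hn

theorem coeff_two_mul_frobeniusSeries_two (A : K⟦X⟧) :
    coeff 2 (A * frobeniusSeries 2 A) =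
      (coeff 0 A ^ 3 + 4 * coeff 0 A * coeff 1 A + 4 * coeff 2 A) / 4 := by
  have h_zero := coeff_zero_frobeniusSeries 2 A
  have h_one : coeff 1 (frobeniusSeries 2 A) = coeff 0 A / 2 := by
    rw [coeff_succ_frobeniusSeries 2 A 0, coeff_mul, Finset.Nat.antidiagonal_zero,
      Finset.sum_singleton, h_zero]
    push_cast
    ring
  have h_two : coeff 2 (frobeniusSeries 2 A) = coeff 1 A / 2 + coeff 0 A ^ 2 / 4 := by
    rw [coeff_succ_frobeniusSeries 2 A 1, coeff_mul,
      Finset.Nat.sum_antidiagonal_eq_sum_range_succ_mk, Finset.sum_range_succ,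
      Finset.sum_range_one, h_zero, h_one]
    push_cast
    ring
  rw [coeff_mul, Finset.Nat.sum_antidiagonal_eq_sum_range_succ_mk, Finset.sum_range_succ,
    Finset.sum_range_succ, Finset.sum_range_one, h_zero, h_one, h_two]
  ring

theorem trivial_monodromy_two_general (A : K⟦X⟧) :
    (∃ u : K⟦X⟧, constantCoeff u = 1 ∧
        X * d⁄dX K (d⁄dX K u) - 2 * d⁄dX K u + A * u = 0) ↔
      coeff 0 A ^ 3 + 4 * coeff 0 A * coeff 1 A + 4 * coeff 2 A = 0 := by
  have h_four : (4 : K) ≠ 0 := by norm_num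
  have h_criterion := exists_fuchsianOp_eq_zero_iff 2 A
  rw [coeff_two_mul_frobeniusSeries_two, div_eq_zero_iff, or_iff_left h_four] at h_criterion
  simpa only [fuchsianOp, Nat.cast_ofNat] using h_criterion

end FrobeniusSeries

/-- Frobenius-series form of trivial monodromy for indicial exponents `2, -1`:
the formal ODE `t·u″ − 2u′ + A·u = 0` has a formal power series solution with `u(0) = 1`
iff `A₀³ + 4A₀A₁ + 4A₂ = 0`. -/
theorem trivial_monodromy_two (A : PowerSeries ℂ) :
    (∃ u : PowerSeries ℂ, constantCoeff u = 1 ∧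
        X * derivative ℂ (derivative ℂ u) - 2 * derivative ℂ u + A * u = 0)
      ↔ (coeff 0 A) ^ 3 + 4 * coeff 0 A * coeff 1 A + 4 * coeff 2 A = 0 :=
  trivial_monodromy_two_general A
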